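/- Let A > 0, k > 0, α > 1. Let γ₁, γ₂ be continuously differentiable on [0,1] with γ₁(0) = γ₂(0) = 0, and for δ > 0 define γᵢ^δ(t) = γᵢ(δt) for t ∈ [0, 1/δ]. For every ν > 0 there exist ω₂ > 0 and δ₂ > 0 such that for all ω > ω₂ and all δ ∈ (0, δ₂): the solution X = (x, v_x, y, v_y) of Ẋ = F(t, X, ω, γ^δ) with initial condition X(0) = 0 is defined on [0, 1/δ] and satisfies ‖(x(t), y(t)) − (γ₁^δ(t), γ₂^δ(t))‖ < ν for all t ∈ [0, 1/δ]. -/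

import Mathlib

open Real Set

/-!
Identify the plane with `ℂ` and let `e = exp (iωt)`. At displacement `p` from the trajectory the
force is, to first order in `p`, `-A e - A (α - 1) p - A α e² p̄`. Its first and last terms
oscillate with frequencies `ω` and `2ω`; removing their primitives, which are `O(1/ω)`, from the
velocity leaves a damped oscillator of stiffness `A (α - 1) > 0`, perturbed by an `o(‖p‖)`
remainder, an `O(1/ω)` error, and the slow speed of the trajectory. A strict Lyapunov function of
that oscillator then cannot cross a small level. The same bound holds for curves that obey the
equation only while close to the trajectory, and such curves always exist because the singularity
of the field can be cut off; hence the true solution exists and stays close.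
-/

open Metric Filter Topology ComplexConjugate
open scoped NNReal RealInnerProductSpace

section Repulsion

variable {E : Type*} [NormedAddCommGroup E]

/-- The field of a unit repelling source at the origin whose force decays like `‖u‖ ^ (1 - 2α)`;
it vanishes at the source itself. -/
noncomputable def repulsion [NormedSpace ℝ E] (α : ℝ) (u : E) : E :=
  (‖u‖ ^ 2) ^ (-α) • u

variable [InnerProductSpace ℝ E]

lemma contDiffAt_repulsion (α : ℝ) {n : WithTop ℕ∞} {u : E} (hu : u ≠ 0) :
    ContDiffAt ℝ n (repulsion α) u :=
  ((contDiff_norm_sq ℝ).contDiffAt.rpow_const_of_ne (by simpa using hu)).smul contDiffAt_id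

lemma hasFDerivAt_repulsion_of_norm_eq_one (α : ℝ) {v : E} (hv : ‖v‖ = 1) :
    HasFDerivAt (repulsion α)
      (.id ℝ E - (2 * α) • (innerSL ℝ v).smulRight v) v := by
  have hpow := (hasStrictFDerivAt_norm_sq v).hasFDerivAt.rpow_const (p := -α) (.inl (by simp [hv]))
  refine (hpow.smul (hasFDerivAt_id v)).congr_fderiv (ContinuousLinearMap.ext fun h => ?_)
  simp only [hv, one_pow, one_rpow, id, add_apply, sub_apply, smul_apply,
    ContinuousLinearMap.smulRight_apply, ContinuousLinearMap.id_apply, innerSL_apply_apply]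
  module

lemma repulsion_mul (α : ℝ) {e : ℂ} (he : ‖e‖ = 1) (u : ℂ) :
    repulsion α (e * u) = e * repulsion α u := by
  simp only [repulsion, norm_mul, he, one_mul, mul_smul_comm]

lemma isLittleO_repulsion_neg_one_add (α : ℝ) :
    (fun h : ℂ => repulsion α (-1 + h) + 1 + (α - 1) * h + α * conj h) =o[𝓝 0] (fun h => h) := by
  have hderiv := hasFDerivAt_repulsion_of_norm_eq_one α (v := (-1 : ℂ)) (by simp)
  refine (hasFDerivAt_iff_isLittleO_nhds_zero.1 hderiv).congr_left fun h => ?_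
  have hone : repulsion α (-1 : ℂ) = -1 := by simp [repulsion]
  have hinner : ⟪(-1 : ℂ), h⟫ = -h.re := by simp [Complex.inner]
  simp only [hone, hinner, sub_apply, smul_apply, ContinuousLinearMap.smulRight_apply,
    ContinuousLinearMap.id_apply, innerSL_apply_apply, Complex.real_smul]
  push_cast
  linear_combination (2 * α : ℂ) * Complex.re_eq_add_conj h

-- Rotating the source to `1` makes the expansion at a single point uniform over the unit circle.
lemma exists_norm_repulsion_sub_le (α : ℝ) {ε : ℝ} (hε : 0 < ε) :
    ∃ r > 0, ∀ e p : ℂ, ‖e‖ = 1 → ‖p‖ ≤ r →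
      ‖repulsion α (p - e) + e + (α - 1) * p + α * (e ^ 2 * conj p)‖ ≤ ε * ‖p‖ := by
  obtain ⟨r, hr, hball⟩ :=
    nhds_basis_closedBall.eventually_iff.1 ((isLittleO_repulsion_neg_one_add α).def hε)
  refine ⟨r, hr, fun e p he hp => ?_⟩
  have hunit : e * conj e = 1 := by simp [Complex.mul_conj', he]
  have hrot : p - e = e * (-1 + conj e * p) := by linear_combination (-p) * hunit
  have hexp := hball (x := conj e * p) (by simpa [he] using hp)
  calc ‖repulsion α (p - e) + e + (α - 1) * p + α * (e ^ 2 * conj p)‖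
      = ‖e * (repulsion α (-1 + conj e * p) + 1 + (α - 1) * (conj e * p)
          + α * conj (conj e * p))‖ := by
        rw [hrot, repulsion_mul α he, map_mul, Complex.conj_conj]
        congr 1
        linear_combination (-(α - 1) * p : ℂ) * hunit
    _ ≤ ε * ‖p‖ := by simpa [he] using hexp

end Repulsion

section DampedOscillator

variable {E : Type*} [NormedAddCommGroup E] [InnerProductSpace ℝ E] {a k : ℝ}

/-- A strict Lyapunov function of the damped oscillator `p' = v`, `v' = -a p - k v`. The cross term
hidden in `‖v + k p‖ ^ 2` makes it decay in the position as well as in the velocity. -/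
noncomputable def oscillatorEnergy (a k : ℝ) (p v : E) : ℝ :=
  a * ‖p‖ ^ 2 + ‖v‖ ^ 2 / 2 + ‖v + k • p‖ ^ 2 / 2

/-- The rate of change of `oscillatorEnergy a k` at `(p, v)` along the velocity `(p', v')`. -/
noncomputable def oscillatorEnergyRate (a k : ℝ) (p v p' v' : E) : ℝ :=
  2 * a * ⟪p, p'⟫ + ⟪v, v'⟫ + ⟪v + k • p, v' + k • p'⟫

lemma hasDerivWithinAt_oscillatorEnergy {p v : ℝ → E} {p' v' : E} {s : Set ℝ} {t : ℝ}
    (hp : HasDerivWithinAt p p' s t) (hv : HasDerivWithinAt v v' s t) :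
    HasDerivWithinAt (fun t => oscillatorEnergy a k (p t) (v t))
      (oscillatorEnergyRate a k (p t) (v t) p' v') s t := by
  refine (((hp.norm_sq.const_mul a).add (hv.norm_sq.div_const 2)).add
    ((hv.add (hp.const_smul k)).norm_sq.div_const 2)).congr_deriv ?_
  simp only [oscillatorEnergyRate, Pi.add_apply, Pi.smul_apply]
  ring

lemma oscillatorEnergyRate_eq (p v p' v' : E) :
    oscillatorEnergyRate a k p v p' v' = -k * (a * ‖p‖ ^ 2 + ‖v‖ ^ 2)
      + ⟪(2 * a + k ^ 2) • p + k • v, p' - v⟫ + ⟪(2 : ℝ) • v + k • p, v' + a • p + k • v⟫ := by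
  simp only [oscillatorEnergyRate, inner_add_left, inner_add_right, inner_sub_right,
    real_inner_smul_left, real_inner_smul_right, ← real_inner_self_eq_norm_sq,
    real_inner_comm p v]
  ring

lemma exists_norm_le_of_oscillatorEnergy_le (ha : 0 < a) (k : ℝ) {s : ℝ} (hs : 0 < s) :
    ∃ ρ > 0, ∀ p v : E, oscillatorEnergy a k p v ≤ ρ → ‖p‖ ≤ s ∧ ‖v‖ ≤ s := by
  refine ⟨min a (1 / 2) * s ^ 2, by positivity, fun p v h => ?_⟩
  have hpa : a * ‖p‖ ^ 2 ≤ oscillatorEnergy a k p v := by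
    unfold oscillatorEnergy; nlinarith [sq_nonneg ‖v‖, sq_nonneg ‖v + k • p‖]
  have hva : 1 / 2 * ‖v‖ ^ 2 ≤ oscillatorEnergy a k p v := by
    unfold oscillatorEnergy; nlinarith [mul_nonneg ha.le (sq_nonneg ‖p‖), sq_nonneg ‖v + k • p‖]
  have hma : min a (1 / 2) * s ^ 2 ≤ a * s ^ 2 := by gcongr; exact min_le_left _ _
  have hmh : min a (1 / 2) * s ^ 2 ≤ 1 / 2 * s ^ 2 := by gcongr; exact min_le_right _ _
  exact ⟨le_of_sq_le_sq (le_of_mul_le_mul_left (hpa.trans (h.trans hma)) ha) hs.le,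
    le_of_sq_le_sq (le_of_mul_le_mul_left (hva.trans (h.trans hmh)) one_half_pos) hs.le⟩

lemma oscillatorEnergy_le (ha : 0 < a) (hk : 0 < k) (p v : E) :
    oscillatorEnergy a k p v ≤ (2 * a + k ^ 2 + k + 2) * (‖p‖ + ‖v‖) ^ 2 := by
  have htri : ‖v + k • p‖ ≤ ‖v‖ + k * ‖p‖ := by
    simpa [norm_smul, abs_of_pos hk] using norm_add_le v (k • p)
  calc oscillatorEnergy a k p v
      ≤ a * ‖p‖ ^ 2 + ‖v‖ ^ 2 / 2 + (‖v‖ + k * ‖p‖) ^ 2 / 2 := by unfold oscillatorEnergy; gcongr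
    _ ≤ a * ‖p‖ ^ 2 + ‖v‖ ^ 2 / 2 + (‖v‖ + k * ‖p‖) ^ 2 / 2
        + ((a + k ^ 2 / 2 + k + 2) * ‖p‖ ^ 2 + (2 * a + k ^ 2 + k + 1) * ‖v‖ ^ 2
          + (4 * a + 2 * k ^ 2 + k + 4) * (‖p‖ * ‖v‖)) := le_add_of_nonneg_right (by positivity)
    _ = (2 * a + k ^ 2 + k + 2) * (‖p‖ + ‖v‖) ^ 2 := by ring

lemma oscillatorEnergyRate_le (ha : 0 < a) (hk : 0 < k) {p v p' v' : E} {ζ η : ℝ}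
    (hp : ‖p' - v‖ ≤ ζ) (hv : ‖v' + a • p + k • v‖ ≤ η) :
    oscillatorEnergyRate a k p v p' v' ≤ -k * (a * ‖p‖ ^ 2 + ‖v‖ ^ 2)
      + (2 * a + k ^ 2 + k + 2) * (‖p‖ + ‖v‖) * (ζ + η) := by
  have hpos : ⟪(2 * a + k ^ 2) • p + k • v, p' - v⟫
      ≤ (2 * a + k ^ 2 + k + 2) * (‖p‖ + ‖v‖) * ζ := by
    refine (real_inner_le_norm _ _).trans (mul_le_mul ?_ hp (norm_nonneg _) (by positivity))
    refine (norm_add_le _ _).trans ?_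
    simp only [norm_smul, Real.norm_of_nonneg hk.le,
      Real.norm_of_nonneg (by positivity : 0 ≤ 2 * a + k ^ 2)]
    nlinarith [mul_nonneg hk.le (norm_nonneg p), mul_nonneg ha.le (norm_nonneg v),
      mul_nonneg (sq_nonneg k) (norm_nonneg v), norm_nonneg p, norm_nonneg v]
  have hvel : ⟪(2 : ℝ) • v + k • p, v' + a • p + k • v⟫
      ≤ (2 * a + k ^ 2 + k + 2) * (‖p‖ + ‖v‖) * η := by
    refine (real_inner_le_norm _ _).trans (mul_le_mul ?_ hv (norm_nonneg _) (by positivity))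
    refine (norm_add_le _ _).trans ?_
    simp only [norm_smul, Real.norm_of_nonneg hk.le, Real.norm_two]
    nlinarith [mul_nonneg hk.le (norm_nonneg v), mul_nonneg ha.le (norm_nonneg v),
      mul_nonneg ha.le (norm_nonneg p), mul_nonneg (sq_nonneg k) (norm_nonneg p),
      mul_nonneg (sq_nonneg k) (norm_nonneg v), norm_nonneg p, norm_nonneg v]
  rw [oscillatorEnergyRate_eq]
  linarith

lemma exists_oscillatorEnergyRate_neg (ha : 0 < a) (hk : 0 < k) :
    ∃ ε > 0, ∀ ρ > 0, ∃ ζ > 0, ∀ p v p' v' : E, oscillatorEnergy a k p v = ρ →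
      ‖p' - v‖ ≤ ζ → ‖v' + a • p + k • v‖ ≤ ε * ‖p‖ + ζ →
        oscillatorEnergyRate a k p v p' v' < 0 := by
  obtain ⟨L, hL⟩ : ∃ L, L = 2 * a + k ^ 2 + k + 2 := ⟨_, rfl⟩
  obtain ⟨m, hm, hma, hm1⟩ : ∃ m > 0, m ≤ a ∧ m ≤ 1 :=
    ⟨min a 1, by positivity, min_le_left _ _, min_le_right _ _⟩
  have hL0 : 0 < L := by rw [hL]; positivity
  refine ⟨k * m / (4 * L), by positivity, fun ρ hρ =>
    ⟨k * m * √(ρ / L) / (16 * L), by positivity, fun p v p' v' henergy hp hv => ?_⟩⟩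
  have hrate := oscillatorEnergyRate_le ha hk hp hv
  have hle := oscillatorEnergy_le ha hk p v
  rw [← hL] at hrate hle
  set N := ‖p‖ + ‖v‖
  have hlower : √(ρ / L) ≤ N :=
    (sqrt_le_left (by positivity)).2 ((div_le_iff₀' hL0).2 (henergy ▸ hle))
  have hN0 : 0 < N := (by positivity : 0 < √(ρ / L)).trans_le hlower
  have hdamp : m * N ^ 2 / 2 ≤ a * ‖p‖ ^ 2 + ‖v‖ ^ 2 := by
    nlinarith [mul_nonneg (sub_nonneg.2 hma) (sq_nonneg ‖p‖), sq_nonneg (‖p‖ - ‖v‖),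
      mul_nonneg (sub_nonneg.2 hm1) (sq_nonneg ‖v‖), mul_nonneg hm.le (sq_nonneg (‖p‖ - ‖v‖))]
  have hpert : L * N * (k * m * √(ρ / L) / (16 * L) + (k * m / (4 * L) * ‖p‖
      + k * m * √(ρ / L) / (16 * L))) ≤ 3 / 8 * (k * m * N ^ 2) := by
    have hpN : ‖p‖ ≤ N := le_add_of_nonneg_right (norm_nonneg v)
    calc _ ≤ L * N * (k * m * N / (16 * L) + (k * m / (4 * L) * N + k * m * N / (16 * L))) := by
          gcongr
      _ = 3 / 8 * (k * m * N ^ 2) := by field_simp; norm_num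
  have hgain : 0 < k * m * N ^ 2 := by positivity
  nlinarith [mul_le_mul_of_nonneg_left hdamp hk.le]

lemma oscillatorEnergy_le_of_rate_neg {p v p' v' : ℝ → E} {T ρ : ℝ}
    (hp : ∀ t ∈ Icc 0 T, HasDerivWithinAt p (p' t) (Icc 0 T) t)
    (hv : ∀ t ∈ Icc 0 T, HasDerivWithinAt v (v' t) (Icc 0 T) t)
    (hstart : oscillatorEnergy a k (p 0) (v 0) ≤ ρ)
    (hrate : ∀ t ∈ Icc 0 T, oscillatorEnergy a k (p t) (v t) = ρ →
      oscillatorEnergyRate a k (p t) (v t) (p' t) (v' t) < 0) {t : ℝ} (ht : t ∈ Icc 0 T) :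
    oscillatorEnergy a k (p t) (v t) ≤ ρ := by
  have henergy := fun t ht =>
    hasDerivWithinAt_oscillatorEnergy (a := a) (k := k) (hp t ht) (hv t ht)
  exact image_le_of_deriv_right_lt_deriv_boundary
    (fun t ht => (henergy t ht).continuousWithinAt)
    (fun t ht => (henergy t ⟨ht.1, ht.2.le⟩).mono_of_mem_nhdsWithin
      (Filter.mem_of_superset (Icc_mem_nhdsGE ht.2) (Icc_subset_Icc_left ht.1)))
    hstart (fun t => hasDerivAt_const t ρ) (fun t ht => hrate t ⟨ht.1, ht.2.le⟩) ht

end DampedOscillator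

section OrdinaryDifferentialEquations

variable {E : Type*} [NormedAddCommGroup E] [NormedSpace ℝ E]

lemma exists_lipschitzWith_bounded_eqOn_closedBall [FiniteDimensional ℝ E]
    {F : Type*} [NormedAddCommGroup F] [NormedSpace ℝ F] {f : E → F} {c : E} {r R : ℝ} (hr : 0 < r)
    (hrR : r < R) (hf : ∀ x ∈ closedBall c R, ContDiffAt ℝ 1 f x) :
    ∃ (h : E → F) (K C : ℝ≥0), LipschitzWith K h ∧ (∀ x, ‖h x‖ ≤ C) ∧
      EqOn h f (closedBall c r) := by
  let χ : ContDiffBump c := ⟨r, R, hr, hrR⟩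
  have hsmooth : ContDiff ℝ 1 (fun x => χ x • f x) := by
    refine contDiff_iff_contDiffAt.2 fun x => ?_
    by_cases hx : x ∈ closedBall c R
    · exact χ.contDiff.contDiffAt.smul (hf x hx)
    · have hvanish := notMem_tsupport_iff_eventuallyEq.1 (χ.tsupport_eq ▸ hx)
      refine contDiffAt_const (c := (0 : F)) |>.congr_of_eventuallyEq (hvanish.mono fun y hy => ?_)
      simp only [hy, Pi.zero_apply, zero_smul]
  have hcompact : HasCompactSupport (fun x => χ x • f x) := χ.hasCompactSupport.smul_right
  obtain ⟨K, hK⟩ := hsmooth.lipschitzWith_of_hasCompactSupport hcompact one_ne_zero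
  obtain ⟨C, hC⟩ := hcompact.exists_bound_of_continuous hsmooth.continuous
  refine ⟨_, K, C.toNNReal, hK, fun x => (hC x).trans (Real.le_coe_toNNReal C), fun x hx => ?_⟩
  simp only [χ.one_of_mem_closedBall hx, one_smul]

lemma exists_forall_hasDerivAt_of_lipschitzWith_of_bounded [CompleteSpace E] {G : ℝ → E → E}
    {K C : ℝ≥0} {T : ℝ} (hT : 0 ≤ T) (hlip : ∀ t ∈ Icc 0 T, LipschitzWith K (G t))
    (hcont : ∀ x, ContinuousOn (G · x) (Icc 0 T)) (hbound : ∀ t ∈ Icc 0 T, ∀ x, ‖G t x‖ ≤ C)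
    (x₀ : E) : ∃ X : ℝ → E, X 0 = x₀ ∧ ∀ t ∈ Icc 0 T, HasDerivAt X (G t (X t)) t := by
  -- Freezing the field outside `[0, T]` makes `0` and `T` interior times.
  let G' : ℝ → E → E := fun t => G (projIcc 0 T hT t)
  have hG' : IsPicardLindelof G' (tmin := -1) (tmax := T + 1) ⟨0, by constructor <;> linarith⟩
      x₀ (C * (T + 1).toNNReal) 0 C K := by
    refine ⟨fun t _ => (hlip _ (projIcc 0 T hT t).2).lipschitzOnWith, fun x _ => ?_,
      fun t _ x _ => hbound _ (projIcc 0 T hT t).2 x, ?_⟩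
    · exact ((hcont x).comp_continuous (by fun_prop) fun t => (projIcc 0 T hT t).2).continuousOn
    · simp [hT]
  obtain ⟨X, hX₀, hX⟩ := hG'.exists_eq_forall_mem_Icc_hasDerivWithinAt₀
  refine ⟨X, hX₀, fun t ht => ?_⟩
  have hderiv := (hX t ⟨by linarith [ht.1], by linarith [ht.2]⟩).hasDerivAt
    (Icc_mem_nhds (by linarith [ht.1]) (by linarith [ht.2]))
  simpa only [G', projIcc_of_mem hT ht] using hderiv

/-- `X` is differentiable on `[0, T]` and obeys `X' = F(t, X)` at those times `t` at which it lies
in `U t`. Both solutions of `F` and solutions of a modification of `F` outside `U` qualify, so an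
a priori bound for such curves serves for tracking and for global existence alike. -/
def IsSolutionInside (F : ℝ → E → E) (U : ℝ → Set E) (T : ℝ) (X : ℝ → E) : Prop :=
  ∀ t ∈ Icc 0 T, DifferentiableAt ℝ X t ∧ (X t ∈ U t → deriv X t = F t (X t))

lemma IsSolutionInside.of_hasDerivAt {G F : ℝ → E → E} {U : ℝ → Set E} {T : ℝ} {X : ℝ → E}
    (hX : ∀ t ∈ Icc 0 T, HasDerivAt X (G t (X t)) t)
    (hGF : ∀ t ∈ Icc 0 T, EqOn (G t) (F t) (U t)) :
    IsSolutionInside F U T X :=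
  fun t ht => ⟨(hX t ht).differentiableAt, fun hU => (hX t ht).deriv.trans (hGF t ht hU)⟩

lemma IsSolutionInside.hasDerivAt {F : ℝ → E → E} {U : ℝ → Set E} {T : ℝ} {X : ℝ → E}
    (hX : IsSolutionInside F U T X) {t : ℝ} (ht : t ∈ Icc 0 T) (hU : X t ∈ U t) :
    HasDerivAt X (F t (X t)) t :=
  (hX t ht).2 hU ▸ (hX t ht).1.hasDerivAt

end OrdinaryDifferentialEquations

section SlowTrajectories

variable {E : Type*} [NormedAddCommGroup E] [NormedSpace ℝ E]

/-- `g` is differentiable on `[0, T]` with speed at most `μ`, one-sidedly at the endpoints. -/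
def HasSpeedLE (g : ℝ → E) (T μ : ℝ) : Prop :=
  ∀ t ∈ Icc 0 T, ∃ g', HasDerivWithinAt g g' (Icc 0 T) t ∧ ‖g'‖ ≤ μ

lemma exists_hasSpeedLE_comp_mul_left {Γ : ℝ → E} (hΓ : ContDiffOn ℝ 1 Γ (Icc 0 1)) {μ : ℝ}
    (hμ : 0 < μ) :
    ∃ δ₂ > 0, ∀ δ, 0 < δ → δ < δ₂ → HasSpeedLE (fun t => Γ (δ * t)) (1 / δ) μ := by
  obtain ⟨C, hC⟩ := isCompact_Icc.exists_bound_of_continuousOn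
    (hΓ.continuousOn_derivWithin (uniqueDiffOn_Icc zero_lt_one) le_rfl)
  have hC0 : 0 < |C| + 1 := by positivity
  refine ⟨μ / (|C| + 1), by positivity, fun δ hδ hδμ t ht => ?_⟩
  have hmaps : MapsTo (δ * ·) (Icc 0 (1 / δ)) (Icc 0 1) := fun t ht =>
    ⟨mul_nonneg hδ.le ht.1, by simpa [mul_comm] using (le_div_iff₀ hδ).1 ht.2⟩
  have hderiv := (hΓ.differentiableOn one_ne_zero _ (hmaps ht)).hasDerivWithinAt.scomp t
    ((hasDerivAt_id t).const_mul δ).hasDerivWithinAt hmaps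
  refine ⟨_, hderiv, ?_⟩
  calc ‖(δ * 1) • derivWithin Γ (Icc 0 1) (δ * t)‖
      = δ * ‖derivWithin Γ (Icc 0 1) (δ * t)‖ := by simp [norm_smul, abs_of_pos hδ]
    _ ≤ δ * (|C| + 1) := by
        gcongr
        linarith [hC _ (hmaps ht), le_abs_self C]
    _ ≤ μ := ((lt_div_iff₀ hC0).1 hδμ).le

end SlowTrajectories

section RotatingSource

open Complex (I)

/-- The planar vector field, on pairs (position, velocity), of a particle with friction coefficient
`k` repelled with strength `A` by a source at `c`. -/
noncomputable def sourceField (A k α : ℝ) (c : ℂ) (X : ℂ × ℂ) : ℂ × ℂ :=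
  (X.2, A • repulsion α (X.1 - c) - k • X.2)

/-- The position of the rotating source relative to the trajectory it encircles. -/
noncomputable def orbit (ω t : ℝ) : ℂ :=
  Complex.exp (ω * t * I)

/-- The velocity coordinate in which the leading oscillation of the force on a particle at
displacement `p` from the trajectory, exerted by the source at relative position `e`, has been
integrated out. -/
noncomputable def averagedVelocity (A α ω : ℝ) (e p w : ℂ) : ℂ :=
  w - A / ω * I * (e + α / 2 * (e ^ 2 * conj p))

/-- The rate of change of `averagedVelocity A α ω (orbit ω t)` along `(p', w')`, at displacement
`p` and source position `orbit ω t = e`. -/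
noncomputable def averagedAcceleration (A α ω : ℝ) (e p p' w' : ℂ) : ℂ :=
  w' + A * (e + α * (e ^ 2 * conj p)) - A / ω * I * (α / 2 * (e ^ 2 * conj p'))

variable {A k α ω : ℝ}

lemma norm_orbit (ω t : ℝ) : ‖orbit ω t‖ = 1 := by
  simpa [orbit] using Complex.norm_exp_ofReal_mul_I (ω * t)

lemma hasDerivAt_orbit (ω t : ℝ) : HasDerivAt (orbit ω) (ω * I * orbit ω t) t := by
  have hphase : HasDerivAt (fun t : ℝ => (ω * t * I : ℂ)) (ω * I) t := by
    simpa using ((hasDerivAt_id t).ofReal_comp.const_mul (ω : ℂ)).mul_const I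
  exact hphase.cexp.congr_deriv (mul_comm _ _)

lemma sourceField_smul {e : ℂ} (he : ‖e‖ = 1) (c : ℂ) (X : ℂ × ℂ) :
    sourceField A k α (e * c) (e • X) = e • sourceField A k α c X := by
  simp only [sourceField, Prod.smul_fst, Prod.smul_snd, smul_eq_mul, ← mul_sub,
    repulsion_mul α he, Prod.smul_mk, Prod.mk.injEq, true_and]
  simp only [mul_sub, mul_smul_comm]

lemma sourceField_add (d c : ℂ) (X : ℂ × ℂ) :
    sourceField A k α (d + c) X = sourceField A k α c (X - (d, 0)) := by
  simp [sourceField, sub_sub]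

lemma contDiffAt_sourceField {n : WithTop ℕ∞} {c : ℂ} {X : ℂ × ℂ} (hX : X.1 ≠ c) :
    ContDiffAt ℝ n (sourceField A k α c) X := by
  have hforce : ContDiffAt ℝ n (fun X : ℂ × ℂ => repulsion α (X.1 - c)) X :=
    (contDiffAt_repulsion α (sub_ne_zero.2 hX)).comp X (contDiffAt_fst.sub contDiffAt_const)
  exact contDiffAt_snd.prodMk ((hforce.const_smul A).sub (contDiffAt_snd.const_smul k))

lemma hasDerivWithinAt_averagedVelocity (hω : ω ≠ 0) {p w : ℝ → ℂ} {p' w' : ℂ} {s : Set ℝ}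
    {t : ℝ} (hp : HasDerivWithinAt p p' s t) (hw : HasDerivWithinAt w w' s t) :
    HasDerivWithinAt (fun t => averagedVelocity A α ω (orbit ω t) (p t) (w t))
      (averagedAcceleration A α ω (orbit ω t) (p t) p' w') s t := by
  have horbit := (hasDerivAt_orbit ω t).hasDerivWithinAt (s := s)
  refine (hw.sub ((horbit.add (((horbit.pow 2).mul hp.star).const_mul (α / 2 : ℂ))).const_mul
    (A / ω * I : ℂ))).congr_deriv ?_
  have hωC : (ω : ℂ) ≠ 0 := Complex.ofReal_ne_zero.2 hω
  simp only [averagedAcceleration, starRingEnd_apply, Pi.pow_apply, Nat.cast_ofNat,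
    Nat.add_one_sub_one, pow_one]
  field_simp
  linear_combination (-2 * A * ω * (orbit ω t + α * (orbit ω t ^ 2 * star (p t)))) * Complex.I_sq

lemma norm_averagedVelocity_sub_le (hA : 0 < A) (hα : 0 < α) (hω : 0 < ω) {e p : ℂ}
    (he : ‖e‖ = 1) (hp : ‖p‖ ≤ 1) (w : ℂ) :
    ‖averagedVelocity A α ω e p w - w‖ ≤ A * (1 + α) / ω := by
  have hosc : ‖e + α / 2 * (e ^ 2 * conj p)‖ ≤ 1 + α := by
    refine (norm_add_le _ _).trans ?_
    simp only [norm_mul, norm_div, norm_pow, he, RCLike.norm_conj, Complex.norm_real,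
      Real.norm_of_nonneg hα.le, Complex.norm_ofNat]
    nlinarith
  calc ‖averagedVelocity A α ω e p w - w‖ = A / ω * ‖e + α / 2 * (e ^ 2 * conj p)‖ := by
        simp [averagedVelocity, abs_of_pos hA, abs_of_pos hω]
    _ ≤ A / ω * (1 + α) := by gcongr
    _ = A * (1 + α) / ω := by ring

lemma norm_averagedAcceleration_add_le (hA : 0 < A) (hk : 0 < k) (hα : 0 < α) (hω : 0 < ω)
    {e p p' : ℂ} {η : ℝ} (he : ‖e‖ = 1) (hp : ‖p‖ ≤ 1) (hp' : ‖p'‖ ≤ 2) (w : ℂ)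
    (hforce : ‖repulsion α (p - e) + e + (α - 1) * p + α * (e ^ 2 * conj p)‖ ≤ η) :
    ‖averagedAcceleration A α ω e p p' (A • repulsion α (p - e) - k • w) + (A * (α - 1)) • p
        + k • averagedVelocity A α ω e p w‖ ≤ A * η + (1 + k) * (A * (1 + α)) / ω := by
  have hosc : ‖A / ω * I * (α / 2 * (e ^ 2 * conj p'))‖ ≤ A * (1 + α) / ω := by
    simp only [norm_mul, norm_div, norm_pow, he, RCLike.norm_conj, Complex.norm_real,
      Complex.norm_I, Real.norm_of_nonneg hα.le, Real.norm_of_nonneg hA.le,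
      Real.norm_of_nonneg hω.le, Complex.norm_ofNat, one_pow, one_mul, mul_one]
    calc A / ω * (α / 2 * ‖p'‖) ≤ A / ω * (α / 2 * 2) := by gcongr
      _ ≤ A / ω * (1 + α) := by gcongr; linarith
      _ = A * (1 + α) / ω := by ring
  have hshift := norm_averagedVelocity_sub_le hA hα hω he hp w
  calc _ = ‖A • (repulsion α (p - e) + e + (α - 1) * p + α * (e ^ 2 * conj p))
          - A / ω * I * (α / 2 * (e ^ 2 * conj p')) + k • (averagedVelocity A α ω e p w - w)‖ := by
        congr 1
        simp only [averagedAcceleration, Complex.real_smul]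
        push_cast
        ring
    _ ≤ A * η + A * (1 + α) / ω + k * (A * (1 + α) / ω) := by
        refine (norm_add_le _ _).trans (add_le_add ((norm_sub_le _ _).trans
          (add_le_add ?_ hosc)) ?_) <;>
        rw [norm_smul, Real.norm_of_nonneg (by positivity)] <;> gcongr
    _ = A * η + (1 + k) * (A * (1 + α)) / ω := by ring

lemma eventually_norm_averagedVelocity_sub_le (hA : 0 < A) (hα : 0 < α) {β : ℝ} (hβ : 0 < β) :
    ∀ᶠ ω in atTop, ∀ e p w : ℂ, ‖e‖ = 1 → ‖p‖ ≤ 1 → ‖averagedVelocity A α ω e p w - w‖ ≤ β := by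
  have hlarge : ∀ᶠ ω in atTop, A * (1 + α) / ω ≤ β :=
    (tendsto_const_nhds.div_atTop tendsto_id).eventually_le_const hβ
  filter_upwards [eventually_gt_atTop 0, hlarge] with ω hω hle e p w he hp
  exact (norm_averagedVelocity_sub_le hA hα hω he hp w).trans hle

lemma exists_averagedEnergyRate_neg (hA : 0 < A) (hk : 0 < k) (hα : 1 < α) :
    ∃ r > 0, ∀ ρ > 0, ∃ μ > 0, ∀ᶠ ω in atTop, ∀ e p w g' : ℂ,
      ‖e‖ = 1 → ‖p‖ ≤ r → ‖w‖ ≤ r → ‖g'‖ ≤ μ →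
      oscillatorEnergy (A * (α - 1)) k p (averagedVelocity A α ω e p w) = ρ →
      oscillatorEnergyRate (A * (α - 1)) k p (averagedVelocity A α ω e p w) (w - g')
        (averagedAcceleration A α ω e p (w - g') (A • repulsion α (p - e) - k • w)) < 0 := by
  have hα0 : 0 < α := one_pos.trans hα
  obtain ⟨ε, hε, hosc⟩ := exists_oscillatorEnergyRate_neg (E := ℂ) (mul_pos hA (sub_pos.2 hα)) hk
  obtain ⟨r, hr, hrepulsion⟩ := exists_norm_repulsion_sub_le α (div_pos hε hA)
  refine ⟨min r 1, by positivity, fun ρ hρ => ?_⟩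
  obtain ⟨ζ, hζ, hneg⟩ := hosc ρ hρ
  have hlarge : ∀ᶠ ω in atTop, (1 + k) * (A * (1 + α)) / ω ≤ ζ :=
    (tendsto_const_nhds.div_atTop tendsto_id).eventually_le_const hζ
  refine ⟨min (ζ / 2) 1, by positivity, ?_⟩
  filter_upwards [eventually_gt_atTop 0, hlarge,
    eventually_norm_averagedVelocity_sub_le hA hα0 (half_pos hζ)]
    with ω hω hforce hshift e p w g' he hp hw hg henergy
  obtain ⟨hpr, hp1⟩ := le_min_iff.1 hp
  obtain ⟨hgζ, hg1⟩ := le_min_iff.1 hg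
  refine hneg _ _ _ _ henergy ?_ ?_
  · calc ‖w - g' - averagedVelocity A α ω e p w‖
        = ‖(averagedVelocity A α ω e p w - w) + g'‖ := by rw [← norm_neg]; congr 1; ring
      _ ≤ ζ / 2 + ζ / 2 := norm_add_le_of_le (hshift e p w he hp1) hgζ
      _ = ζ := add_halves ζ
  · have hspeed : ‖w - g'‖ ≤ 2 :=
      (norm_sub_le_of_le (hw.trans (min_le_right _ _)) hg1).trans_eq one_add_one_eq_two
    calc _ ≤ A * (ε / A * ‖p‖) + (1 + k) * (A * (1 + α)) / ω :=
          norm_averagedAcceleration_add_le hA hk hα0 hω he hp1 hspeed w (hrepulsion e p he hpr)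
      _ ≤ A * (ε / A * ‖p‖) + ζ := by gcongr
      _ = ε * ‖p‖ + ζ := by field_simp

lemma exists_norm_lt_of_averagedEnergy_le (hA : 0 < A) (hα : 1 < α) (k : ℝ) {r : ℝ} (hr : 0 < r) :
    ∃ ρ > 0, ∀ᶠ ω in atTop, ∀ e p w : ℂ, ‖e‖ = 1 →
      oscillatorEnergy (A * (α - 1)) k p (averagedVelocity A α ω e p w) ≤ ρ →
      ‖p‖ < r ∧ ‖w‖ < r := by
  obtain ⟨ρ, hρ, hle⟩ := exists_norm_le_of_oscillatorEnergy_le (E := ℂ)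
    (mul_pos hA (sub_pos.2 hα)) k (show 0 < min (r / 2) 1 by positivity)
  refine ⟨ρ, hρ, ?_⟩
  filter_upwards [eventually_norm_averagedVelocity_sub_le hA (one_pos.trans hα)
    (show 0 < r / 4 by positivity)] with ω hshift e p w he henergy
  obtain ⟨⟨hp, hp1⟩, hv, -⟩ := (hle _ _ henergy).imp le_min_iff.1 le_min_iff.1
  have hw := norm_le_norm_add_norm_sub' w (averagedVelocity A α ω e p w)
  have hdist := hshift e p w he hp1
  rw [norm_sub_rev] at hdist
  constructor <;> linarith

lemma eventually_averagedEnergy_zero_le (hA : 0 < A) (hα : 0 < α) (a k : ℝ) {ρ : ℝ} (hρ : 0 < ρ) :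
    ∀ᶠ ω in atTop, ∀ e : ℂ, ‖e‖ = 1 →
      oscillatorEnergy a k 0 (averagedVelocity A α ω e 0 0) ≤ ρ := by
  filter_upwards [eventually_norm_averagedVelocity_sub_le hA hα (sqrt_pos.2 hρ)] with ω hshift e he
  have hv : ‖averagedVelocity A α ω e 0 0‖ ^ 2 ≤ ρ :=
    (Real.le_sqrt (norm_nonneg _) hρ.le).1 (by simpa using hshift e 0 0 he (by simp))
  simpa [oscillatorEnergy] using hv

lemma exists_forall_mem_ball_of_isSolutionInside (hA : 0 < A) (hk : 0 < k) (hα : 1 < α) {r : ℝ}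
    (hr : 0 < r) :
    ∃ μ > 0, ∀ᶠ ω in atTop, ∀ (T : ℝ) (g : ℝ → ℂ) (X : ℝ → ℂ × ℂ), HasSpeedLE g T μ →
      X 0 = (g 0, 0) →
      IsSolutionInside (fun t => sourceField A k α (g t + orbit ω t)) (fun t => ball (g t, 0) r)
        T X →
      ∀ t ∈ Icc 0 T, X t ∈ ball (g t, 0) r := by
  obtain ⟨r₁, hr₁, hrate⟩ := exists_averagedEnergyRate_neg hA hk hα
  obtain ⟨ρ, hρ, hconfine⟩ :=
    exists_norm_lt_of_averagedEnergy_le hA hα k (show 0 < min r r₁ by positivity)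
  obtain ⟨μ, hμ, hneg⟩ := hrate ρ hρ
  refine ⟨μ, hμ, ?_⟩
  filter_upwards [eventually_ne_atTop 0, hconfine, hneg,
    eventually_averagedEnergy_zero_le hA (one_pos.trans hα) (A * (α - 1)) k hρ]
    with ω hω hconfine hneg hstart T g X hg hX₀ hX
  choose! g' hg' hspeed using hg
  let p t := (X t).1 - g t
  let v t := averagedVelocity A α ω (orbit ω t) (p t) (X t).2
  have hX' : ∀ t ∈ Icc 0 T, HasDerivWithinAt X (deriv X t) (Icc 0 T) t :=
    fun t ht => (hX t ht).1.hasDerivAt.hasDerivWithinAt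
  have hp : ∀ t ∈ Icc 0 T, HasDerivWithinAt p ((deriv X t).1 - g' t) (Icc 0 T) t :=
    fun t ht => ((ContinuousLinearMap.fst ℝ ℂ ℂ).hasFDerivAt.comp_hasDerivWithinAt t
      (hX' t ht)).sub (hg' t ht)
  have hball : ∀ t, oscillatorEnergy (A * (α - 1)) k (p t) (v t) ≤ ρ →
      X t ∈ ball (g t, 0) (min r r₁) := fun t henergy => by
    obtain ⟨hpr, hwr⟩ := hconfine _ _ _ (norm_orbit ω t) henergy
    rw [← ball_prod_same]
    exact ⟨mem_ball_iff_norm.2 hpr, mem_ball_zero_iff.2 hwr⟩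
  refine fun t ht => ball_subset_ball (min_le_left r r₁) (hball t ?_)
  refine oscillatorEnergy_le_of_rate_neg hp
    (fun t ht => hasDerivWithinAt_averagedVelocity hω (hp t ht)
      ((ContinuousLinearMap.snd ℝ ℂ ℂ).hasFDerivAt.comp_hasDerivWithinAt t (hX' t ht)))
    ?_ (fun t ht henergy => ?_) ht
  · simpa [p, hX₀] using hstart (orbit ω 0) (norm_orbit ω 0)
  · obtain ⟨hpr, hwr⟩ := hconfine _ _ _ (norm_orbit ω t) henergy.le
    rw [(hX t ht).2 (ball_subset_ball (min_le_left r r₁) (hball t henergy.le))]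
    simpa [sourceField, p, sub_sub] using hneg (orbit ω t) (p t) (X t).2 (g' t)
      (norm_orbit ω t) (hpr.le.trans (min_le_right _ _)) (hwr.le.trans (min_le_right _ _))
      (hspeed t ht) henergy

-- In the frame rotating with the source the field is autonomous, so one cutoff serves all times.
lemma exists_lipschitzWith_bounded_eqOn_sourceField (A k α : ℝ) {T : ℝ} {g : ℝ → ℂ}
    (hg : ContinuousOn g (Icc 0 T)) (ω : ℝ) :
    ∃ (G : ℝ → ℂ × ℂ → ℂ × ℂ) (K C : ℝ≥0), (∀ t, LipschitzWith K (G t)) ∧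
      (∀ x, ContinuousOn (G · x) (Icc 0 T)) ∧ (∀ t x, ‖G t x‖ ≤ C) ∧
      ∀ t, EqOn (G t) (sourceField A k α (g t + orbit ω t)) (ball (g t, 0) (1 / 2)) := by
  have hsmooth : ∀ X ∈ closedBall (0 : ℂ × ℂ) (3 / 4), ContDiffAt ℝ 1 (sourceField A k α 1) X := by
    refine fun X hX => contDiffAt_sourceField fun hsource => ?_
    have hle := (norm_fst_le X).trans (mem_closedBall_zero_iff.1 hX)
    norm_num [hsource] at hle
  obtain ⟨H, K, C, hlip, hbound, hH⟩ :=
    exists_lipschitzWith_bounded_eqOn_closedBall (r := 1 / 2) (by norm_num) (by norm_num) hsmooth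
  have hconj_norm : ∀ t, ‖conj (orbit ω t)‖ = 1 := fun t => by rw [RCLike.norm_conj, norm_orbit]
  refine ⟨fun t X => orbit ω t • H (conj (orbit ω t) • (X - (g t, 0))), K, C, fun t => ?_,
    fun X => ?_, fun t X => ?_, fun t X hX => ?_⟩
  · refine LipschitzWith.of_dist_le_mul fun X Y => ?_
    have h := hlip.dist_le_mul (conj (orbit ω t) • (X - (g t, 0)))
      (conj (orbit ω t) • (Y - (g t, 0)))
    simpa [dist_smul₀, norm_orbit] using h
  · have horbit : Continuous (orbit ω) :=
      continuous_iff_continuousAt.2 fun t => (hasDerivAt_orbit ω t).continuousAt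
    have hconj := Complex.continuous_conj.comp horbit
    exact horbit.continuousOn.smul (hlip.continuous.comp_continuousOn (hconj.continuousOn.smul
      (continuousOn_const.sub (hg.prodMk continuousOn_const))))
  · simpa [norm_smul, norm_orbit] using hbound _
  · have hmem : conj (orbit ω t) • (X - (g t, 0)) ∈ closedBall (0 : ℂ × ℂ) (1 / 2) := by
      rw [mem_closedBall_zero_iff, norm_smul, hconj_norm, one_mul]
      exact (mem_ball_iff_norm.1 hX).le
    have hunit : orbit ω t * conj (orbit ω t) = 1 := by simp [Complex.mul_conj', norm_orbit]
    simp only [hH hmem]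
    rw [← sourceField_smul (norm_orbit ω t), mul_one, smul_smul, hunit, one_smul, sourceField_add]

lemma exists_isSolutionInside (A k α : ℝ) {T : ℝ} (hT : 0 ≤ T) {g : ℝ → ℂ}
    (hg : ContinuousOn g (Icc 0 T)) (ω : ℝ) {r : ℝ} (hr : r ≤ 1 / 2) (X₀ : ℂ × ℂ) :
    ∃ X : ℝ → ℂ × ℂ, X 0 = X₀ ∧
      IsSolutionInside (fun t => sourceField A k α (g t + orbit ω t)) (fun t => ball (g t, 0) r)
        T X := by
  obtain ⟨G, K, C, hlip, hcont, hbound, hG⟩ :=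
    exists_lipschitzWith_bounded_eqOn_sourceField A k α hg ω
  obtain ⟨X, hX₀, hX⟩ := exists_forall_hasDerivAt_of_lipschitzWith_of_bounded hT
    (fun t _ => hlip t) hcont (fun t _ => hbound t) X₀
  exact ⟨X, hX₀, .of_hasDerivAt hX fun t _ => (hG t).mono (ball_subset_ball hr)⟩

theorem exists_solution_and_forall_norm_sub_lt (hA : 0 < A) (hk : 0 < k) (hα : 1 < α) {ν : ℝ}
    (hν : 0 < ν) :
    ∃ μ > 0, ∀ᶠ ω in atTop, ∀ (T : ℝ) (g : ℝ → ℂ), 0 ≤ T → HasSpeedLE g T μ →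
      (∃ X : ℝ → ℂ × ℂ, X 0 = (g 0, 0) ∧
        ∀ t ∈ Icc 0 T, HasDerivAt X (sourceField A k α (g t + orbit ω t) (X t)) t) ∧
      ∀ X : ℝ → ℂ × ℂ, X 0 = (g 0, 0) →
        (∀ t ∈ Icc 0 T, HasDerivAt X (sourceField A k α (g t + orbit ω t) (X t)) t) →
        ∀ t ∈ Icc 0 T, ‖(X t).1 - g t‖ < ν := by
  obtain ⟨μ, hμ, hconfine⟩ := exists_forall_mem_ball_of_isSolutionInside hA hk hα
    (show 0 < min ν (1 / 2) by positivity)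
  refine ⟨μ, hμ, hconfine.mono fun ω hconfine T g hT hg => ⟨?_, fun X hX₀ hX t ht => ?_⟩⟩
  · have hgcont : ContinuousOn g (Icc 0 T) := fun t ht =>
      (hg t ht).elim fun g' hg' => hg'.1.continuousWithinAt
    obtain ⟨X, hX₀, hX⟩ :=
      exists_isSolutionInside A k α hT hgcont ω (min_le_right ν (1 / 2)) (g 0, 0)
    exact ⟨X, hX₀, fun t ht => hX.hasDerivAt ht (hconfine T g X hg hX₀ hX t ht)⟩
  · have hball := hconfine T g X hg hX₀ (.of_hasDerivAt hX fun t _ => eqOn_refl _ _) t ht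
    calc ‖(X t).1 - g t‖ ≤ ‖X t - (g t, 0)‖ := norm_fst_le (X t - (g t, 0))
      _ < min ν (1 / 2) := mem_ball_iff_norm.1 hball
      _ ≤ ν := min_le_left _ _

end RotatingSource

section RealCoordinates

lemma hasDerivAt_complexMk_iff {x y : ℝ → ℝ} {x' y' t : ℝ} :
    HasDerivAt (fun t => (⟨x t, y t⟩ : ℂ)) ⟨x', y'⟩ t ↔ HasDerivAt x x' t ∧ HasDerivAt y y' t :=
  ⟨fun h => ⟨Complex.reCLM.hasFDerivAt.comp_hasDerivAt t h,
    Complex.imCLM.hasFDerivAt.comp_hasDerivAt t h⟩,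
    fun h => Complex.equivRealProdCLM.symm.hasFDerivAt.comp_hasDerivAt t (h.1.prodMk h.2)⟩

lemma contDiffOn_complexMk {x y : ℝ → ℝ} {n : WithTop ℕ∞} {s : Set ℝ} (hx : ContDiffOn ℝ n x s)
    (hy : ContDiffOn ℝ n y s) : ContDiffOn ℝ n (fun t => (⟨x t, y t⟩ : ℂ)) s :=
  Complex.equivRealProdCLM.symm.contDiff.comp_contDiffOn (hx.prodMk hy)

lemma orbit_eq_complexMk (ω t : ℝ) : orbit ω t = ⟨cos (ω * t), sin (ω * t)⟩ := by
  rw [orbit, ← Complex.ofReal_mul]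
  exact Complex.ext (Complex.exp_ofReal_mul_I_re _) (Complex.exp_ofReal_mul_I_im _)

lemma sourceField_complexMk (A k α c₁ c₂ x y vx vy : ℝ) :
    sourceField A k α ⟨c₁, c₂⟩ (⟨x, y⟩, ⟨vx, vy⟩) =
      (⟨vx, vy⟩, ⟨A * (x - c₁) / ((x - c₁) ^ 2 + (y - c₂) ^ 2) ^ α - k * vx,
        A * (y - c₂) / ((x - c₁) ^ 2 + (y - c₂) ^ 2) ^ α - k * vy⟩) := by
  have hdisp : (⟨x, y⟩ - ⟨c₁, c₂⟩ : ℂ) = ⟨x - c₁, y - c₂⟩ := rfl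
  simp only [sourceField, hdisp, repulsion, Complex.sq_norm, Complex.normSq_mk, ← sq]
  rw [rpow_neg (by positivity)]
  refine Prod.ext rfl (Complex.ext ?_ ?_) <;>
    simp only [Complex.sub_re, Complex.sub_im, Complex.smul_re, Complex.smul_im, smul_eq_mul] <;>
    ring

lemma hasDerivAt_sourceField_iff {A k α ω g₁ g₂ t : ℝ} {x vx y vy : ℝ → ℝ} :
    HasDerivAt (fun t => ((⟨x t, y t⟩, ⟨vx t, vy t⟩) : ℂ × ℂ))
      (sourceField A k α (⟨g₁, g₂⟩ + orbit ω t) (⟨x t, y t⟩, ⟨vx t, vy t⟩)) t ↔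
    HasDerivAt x (vx t) t ∧
    HasDerivAt vx (A * (x t - cos (ω * t) - g₁) /
      ((x t - cos (ω * t) - g₁) ^ 2 + (y t - sin (ω * t) - g₂) ^ 2) ^ α - k * vx t) t ∧
    HasDerivAt y (vy t) t ∧
    HasDerivAt vy (A * (y t - sin (ω * t) - g₂) /
      ((x t - cos (ω * t) - g₁) ^ 2 + (y t - sin (ω * t) - g₂) ^ 2) ^ α - k * vy t) t := by
  have hsource : (⟨g₁, g₂⟩ + orbit ω t : ℂ) = ⟨cos (ω * t) + g₁, sin (ω * t) + g₂⟩ := by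
    rw [orbit_eq_complexMk, add_comm]; rfl
  simp only [hsource, sourceField_complexMk, ← sub_sub]
  refine ⟨fun h => ?_, fun ⟨hx, hvx, hy, hvy⟩ =>
    (hasDerivAt_complexMk_iff.2 ⟨hx, hy⟩).prodMk (hasDerivAt_complexMk_iff.2 ⟨hvx, hvy⟩)⟩
  obtain ⟨hx, hy⟩ := hasDerivAt_complexMk_iff.1
    ((ContinuousLinearMap.fst ℝ ℂ ℂ).hasFDerivAt.comp_hasDerivAt t h)
  obtain ⟨hvx, hvy⟩ := hasDerivAt_complexMk_iff.1
    ((ContinuousLinearMap.snd ℝ ℂ ℂ).hasFDerivAt.comp_hasDerivAt t h)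
  exact ⟨hx, hvx, hy, hvy⟩

end RealCoordinates

/-- For `A > 0`, `k > 0`, `α > 1` and a `C¹` trajectory `γ` with `γ(0) = 0`,
for every `ν > 0` there exist `ω₂ > 0` and `δ₂ > 0` such that for all `ω > ω₂` and
`δ ∈ (0, δ₂)`, the solution of `Ẋ = F(t, X, ω, γ^δ)` with `X(0) = 0` is defined on
`[0, 1/δ]` and its position stays within distance `ν` of `(γ₁(δt), γ₂(δt))` there. -/
theorem arbitrarily_close_tracking_from_origin
    (A k α : ℝ) (hA : 0 < A) (hk : 0 < k) (hα : 1 < α)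
    (γ₁ γ₂ : ℝ → ℝ)
    (hγ₁ : ContDiffOn ℝ 1 γ₁ (Icc 0 1)) (hγ₂ : ContDiffOn ℝ 1 γ₂ (Icc 0 1))
    (hγ₁0 : γ₁ 0 = 0) (hγ₂0 : γ₂ 0 = 0) :
    ∀ ν : ℝ, 0 < ν →
      ∃ ω₂ > (0 : ℝ), ∃ δ₂ > (0 : ℝ),
        ∀ ω : ℝ, ω₂ < ω → ∀ δ : ℝ, 0 < δ → δ < δ₂ →
          -- a solution starting from the origin is defined on all of [0, 1/δ]
          ((∃ x vx y vy : ℝ → ℝ,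
              x 0 = 0 ∧ vx 0 = 0 ∧ y 0 = 0 ∧ vy 0 = 0 ∧
              ∀ t ∈ Icc (0 : ℝ) (1 / δ),
                HasDerivAt x (vx t) t ∧
                HasDerivAt vx
                  (A * (x t - Real.cos (ω * t) - γ₁ (δ * t)) /
                    ((x t - Real.cos (ω * t) - γ₁ (δ * t)) ^ 2 +
                      (y t - Real.sin (ω * t) - γ₂ (δ * t)) ^ 2) ^ α - k * vx t) t ∧
                HasDerivAt y (vy t) t ∧
                HasDerivAt vy
                  (A * (y t - Real.sin (ω * t) - γ₂ (δ * t)) /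
                    ((x t - Real.cos (ω * t) - γ₁ (δ * t)) ^ 2 +
                      (y t - Real.sin (ω * t) - γ₂ (δ * t)) ^ 2) ^ α - k * vy t) t) ∧
          -- every solution starting from the origin tracks the trajectory within ν
          (∀ x vx y vy : ℝ → ℝ,
              x 0 = 0 → vx 0 = 0 → y 0 = 0 → vy 0 = 0 →
              (∀ t ∈ Icc (0 : ℝ) (1 / δ),
                HasDerivAt x (vx t) t ∧
                HasDerivAt vx
                  (A * (x t - Real.cos (ω * t) - γ₁ (δ * t)) /
                    ((x t - Real.cos (ω * t) - γ₁ (δ * t)) ^ 2 +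
                      (y t - Real.sin (ω * t) - γ₂ (δ * t)) ^ 2) ^ α - k * vx t) t ∧
                HasDerivAt y (vy t) t ∧
                HasDerivAt vy
                  (A * (y t - Real.sin (ω * t) - γ₂ (δ * t)) /
                    ((x t - Real.cos (ω * t) - γ₁ (δ * t)) ^ 2 +
                      (y t - Real.sin (ω * t) - γ₂ (δ * t)) ^ 2) ^ α - k * vy t) t) →
              ∀ t ∈ Icc (0 : ℝ) (1 / δ),
                Real.sqrt ((x t - γ₁ (δ * t)) ^ 2 + (y t - γ₂ (δ * t)) ^ 2) < ν)) := by
  intro ν hν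
  obtain ⟨μ, hμ, htrack⟩ := exists_solution_and_forall_norm_sub_lt hA hk hα hν
  obtain ⟨ω₂, hω₂⟩ := eventually_atTop.1 htrack
  obtain ⟨δ₂, hδ₂, hslow⟩ :=
    exists_hasSpeedLE_comp_mul_left (contDiffOn_complexMk hγ₁ hγ₂) hμ
  refine ⟨max ω₂ 1, by positivity, δ₂, hδ₂, fun ω hω δ hδ hδδ₂ => ?_⟩
  obtain ⟨⟨X, hX₀, hX⟩, htracks⟩ := hω₂ ω ((le_max_left _ _).trans hω.le) (1 / δ) _
    (by positivity) (hslow δ hδ hδδ₂)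
  constructor
  · exact ⟨fun t => (X t).1.re, fun t => (X t).2.re, fun t => (X t).1.im, fun t => (X t).2.im,
      by simp [hX₀, hγ₁0], by simp [hX₀], by simp [hX₀, hγ₂0], by simp [hX₀],
      fun t ht => hasDerivAt_sourceField_iff.1 (hX t ht)⟩
  · intro x vx y vy hx₀ hvx₀ hy₀ hvy₀ hsol t ht
    have hnorm := htracks (fun t => (⟨x t, y t⟩, ⟨vx t, vy t⟩))
      (by simp [hx₀, hvx₀, hy₀, hvy₀, hγ₁0, hγ₂0, Complex.ext_iff])
      (fun t ht => hasDerivAt_sourceField_iff.2 (hsol t ht)) t ht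
    simpa [Complex.norm_eq_sqrt_sq_add_sq] using hnorm
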